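/- arXiv:2209.02456 — 4 statements merged into one kernel-verified Lean document; each statement's English description precedes it below -/
import Mathlib

section
/- Let K ⊆ ℝ^N be a compact set and let φ : ℝ → ℝ be a continuous function that is discriminatory for K. Then for every continuous function f : K → ℝ and every ε > 0 there exist M ∈ ℕ, α_1,…,α_M ∈ ℝ, θ_1,…,θ_M ∈ ℝ, and y_1,…,y_M ∈ ℝ^N such that |f(x) − Σ_{i=1}^M α_i φ(y_iᵀ x + θ_i)| < ε for all x ∈ K; that is, the class of single-hidden-layer real-valued neural networks with activation φ is dense in C(K) with respect to the supremum norm. -/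
/-!
If the span `S` of the ridge functions `x ↦ φ (y ⬝ᵥ x + θ)` were not dense in `C(K, ℝ)`, the
Hahn–Banach separation theorem would give a continuous functional `L` vanishing on `S` and
nonzero at some `f`. By Riesz representation, `L g = ∫ g dμ₁ - ∫ g dμ₂` for two finite measures,
so the signed measure `μ₁ - μ₂` annihilates all ridge functions. As `φ` is discriminatory,
`μ₁ = μ₂`, whence `L = 0`, a contradiction.

Mathlib's Riesz–Markov–Kakutani theorem covers positive functionals only, so `L` has to be written
as a difference of two positive functionals (`exists_pos_sub_pos`). This comes from a second use
of Hahn–Banach, on `C(X, ℝ) × C(X, ℝ)`: the functional `(g, -g) ↦ L g` on the antidiagonal is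
dominated by the sublinear map `(u, v) ↦ ‖L‖ * (‖u⁺‖ + ‖v⁺‖)`, and any extension dominated by
this map is nonnegative on pairs of nonnegative functions.
-/

open Matrix MeasureTheory

/-- A function `φ : ℝ → ℝ` is discriminatory for `K ⊆ ℝ^N` if for every finite
signed regular Borel measure `μ` on `K`, `∫_K φ(yᵀx + θ) dμ(x) = 0` for all
`y ∈ ℝ^N` and `θ ∈ ℝ` implies `μ = 0`. The integral against the signed measure
is expressed via its Jordan decomposition. -/
def Discriminatory {N : ℕ} (φ : ℝ → ℝ) (K : Set (Fin N → ℝ)) : Prop :=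
  ∀ μ : SignedMeasure K,
    μ.toJordanDecomposition.posPart.Regular →
    μ.toJordanDecomposition.negPart.Regular →
    (∀ (y : Fin N → ℝ) (θ : ℝ),
      (∫ x : K, φ (y ⬝ᵥ (x : Fin N → ℝ) + θ) ∂μ.toJordanDecomposition.posPart) -
      (∫ x : K, φ (y ⬝ᵥ (x : Fin N → ℝ) + θ) ∂μ.toJordanDecomposition.negPart) = 0) →
    μ = 0

section RieszRepresentation

variable {X : Type*} [TopologicalSpace X] [CompactSpace X]

lemma norm_sup_zero_smul {c : ℝ} (hc : 0 < c) (u : C(X, ℝ)) :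
    ‖(c • u) ⊔ 0‖ = c * ‖u ⊔ 0‖ := by
  have h : (c • u) ⊔ 0 = c • (u ⊔ 0) := by
    ext x
    simp [mul_max_of_nonneg _ _ hc.le]
  rw [h, norm_smul, Real.norm_of_nonneg hc.le]

lemma norm_sup_zero_add (u v : C(X, ℝ)) :
    ‖(u + v) ⊔ 0‖ ≤ ‖u ⊔ 0‖ + ‖v ⊔ 0‖ := by
  refine le_trans ?_ (norm_add_le _ _)
  refine (ContinuousMap.norm_le _ (norm_nonneg _)).2 fun x => ?_
  refine le_trans ?_ (ContinuousMap.norm_coe_le_norm (u ⊔ 0 + v ⊔ 0) x)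
  have h1 : (0 : ℝ) ≤ max (u x + v x) 0 := le_max_right _ _
  have h2 : (0 : ℝ) ≤ max (u x) 0 + max (v x) 0 :=
    add_nonneg (le_max_right _ _) (le_max_right _ _)
  simp only [ContinuousMap.sup_apply, ContinuousMap.add_apply, ContinuousMap.zero_apply,
    Real.norm_eq_abs, abs_of_nonneg h1, abs_of_nonneg h2]
  exact max_le (add_le_add (le_max_left _ _) (le_max_left _ _)) h2

lemma norm_le_norm_sup_zero_add (u : C(X, ℝ)) : ‖u‖ ≤ ‖u ⊔ 0‖ + ‖(-u) ⊔ 0‖ := by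
  have h : u = u ⊔ 0 - (-u) ⊔ 0 := by
    ext x
    simp only [ContinuousMap.sub_apply, ContinuousMap.sup_apply, ContinuousMap.neg_apply,
      ContinuousMap.zero_apply]
    grind
  calc ‖u‖ = ‖u ⊔ 0 - (-u) ⊔ 0‖ := by rw [← h]
    _ ≤ _ := norm_sub_le _ _

/-- A continuous functional on `C(X, ℝ)` is a difference of two positive functionals. -/
lemma exists_pos_sub_pos (L : StrongDual ℝ C(X, ℝ)) :
    ∃ P Q : C(X, ℝ) →ₗ[ℝ] ℝ, (∀ u, 0 ≤ u → 0 ≤ P u) ∧ (∀ u, 0 ≤ u → 0 ≤ Q u) ∧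
      ∀ u, L u = P u - Q u := by
  let p : (C(X, ℝ) × C(X, ℝ)) →ₗ.[ℝ] ℝ :=
    ⟨(-LinearMap.id : C(X, ℝ) →ₗ[ℝ] C(X, ℝ)).graph,
      (L : C(X, ℝ) →ₗ[ℝ] ℝ) ∘ₗ LinearMap.fst ℝ _ _ ∘ₗ Submodule.subtype _⟩
  obtain ⟨F, hF, hFN⟩ := exists_extension_of_le_sublinear p
    (fun w => ‖L‖ * (‖w.1 ⊔ 0‖ + ‖w.2 ⊔ 0‖))
    (fun c hc w => by
      simp only [Prod.smul_fst, Prod.smul_snd, norm_sup_zero_smul hc]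
      ring)
    (fun w z => by
      rw [← mul_add]
      refine mul_le_mul_of_nonneg_left ?_ (norm_nonneg L)
      have h1 := norm_sup_zero_add w.1 z.1
      have h2 := norm_sup_zero_add w.2 z.2
      simp only [Prod.fst_add, Prod.snd_add]
      linarith)
    (by
      rintro ⟨⟨u, v⟩, hw⟩
      obtain rfl : v = -u := by simpa [p, LinearMap.mem_graph_iff] using hw
      change L u ≤ ‖L‖ * (‖u ⊔ 0‖ + ‖(-u) ⊔ 0‖)
      refine (le_abs_self _).trans ((L.le_opNorm u).trans ?_)
      exact mul_le_mul_of_nonneg_left (norm_le_norm_sup_zero_add u) (norm_nonneg _))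
  -- `F (-w) ≤ ‖L‖ * 0` whenever both components of `w` are nonnegative.
  have hpos : ∀ u v : C(X, ℝ), 0 ≤ u → 0 ≤ v → 0 ≤ F (u, v) := by
    intro u v hu hv
    have h := hFN (-(u, v))
    have h1 : (-u) ⊔ 0 = 0 := sup_eq_right.2 (neg_nonpos.2 hu)
    have h2 : (-v) ⊔ 0 = 0 := sup_eq_right.2 (neg_nonpos.2 hv)
    simp only [map_neg, Prod.fst_neg, Prod.snd_neg, h1, h2, norm_zero, add_zero, mul_zero] at h
    linarith
  refine ⟨F ∘ₗ LinearMap.inl ℝ _ _, F ∘ₗ LinearMap.inr ℝ _ _,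
    fun u hu => hpos u 0 hu le_rfl, fun u hu => hpos 0 u le_rfl hu, fun u => ?_⟩
  have hmem : (u, -u) ∈ p.domain := by simp [p, LinearMap.mem_graph_iff]
  have h : F (u, -u) = L u := hF ⟨(u, -u), hmem⟩
  rw [← h, LinearMap.comp_apply, LinearMap.comp_apply, ← map_sub]
  simp

/-- The Riesz–Markov–Kakutani theorem for a positive functional on all of `C(X, ℝ)`. -/
lemma exists_measure_of_pos [T2Space X] [MeasurableSpace X] [BorelSpace X]
    (P : C(X, ℝ) →ₗ[ℝ] ℝ) (hP : ∀ u, 0 ≤ u → 0 ≤ P u) :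
    ∃ μ : Measure X, IsFiniteMeasure μ ∧ ∀ u : C(X, ℝ), P u = ∫ x, u x ∂μ := by
  let Λ : CompactlySupportedContinuousMap X ℝ →ₚ[ℝ] ℝ :=
    { toFun g := P g.toContinuousMap
      map_add' g g' := map_add P g.toContinuousMap g'.toContinuousMap
      map_smul' c g := map_smul P c g.toContinuousMap
      monotone' g g' hgg' := by
        have h : 0 ≤ P (g'.toContinuousMap - g.toContinuousMap) :=
          hP _ fun x => sub_nonneg.2 (hgg' x)
        rw [map_sub] at h
        exact sub_nonneg.1 h }
  refine ⟨RealRMK.rieszMeasure Λ, inferInstance, fun u => ?_⟩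
  exact (RealRMK.integral_rieszMeasure Λ ⟨u, HasCompactSupport.of_compactSpace _⟩).symm

end RieszRepresentation

/-- The integral against a difference of finite measures does not depend on the representation:
the Jordan parts of `μ₁ - μ₂` give the same value as `μ₁` and `μ₂` themselves. -/
lemma integral_jordan_sub {X : Type*} [TopologicalSpace X] [CompactSpace X] [MeasurableSpace X]
    [BorelSpace X] (μ₁ μ₂ : Measure X) [IsFiniteMeasure μ₁] [IsFiniteMeasure μ₂] (u : C(X, ℝ)) :
    (∫ x, u x ∂(μ₁.toSignedMeasure - μ₂.toSignedMeasure).toJordanDecomposition.posPart) -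
      (∫ x, u x ∂(μ₁.toSignedMeasure - μ₂.toSignedMeasure).toJordanDecomposition.negPart) =
    (∫ x, u x ∂μ₁) - ∫ x, u x ∂μ₂ := by
  set J := (μ₁.toSignedMeasure - μ₂.toSignedMeasure).toJordanDecomposition with hJ
  have hint : ∀ ν : Measure X, IsFiniteMeasure ν → Integrable u ν := fun ν _ =>
    (BoundedContinuousFunction.mkOfCompact u).integrable ν
  have h1 : J.posPart.toSignedMeasure - J.negPart.toSignedMeasure =
      μ₁.toSignedMeasure - μ₂.toSignedMeasure :=
    SignedMeasure.toSignedMeasure_toJordanDecomposition _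
  have h2 : J.posPart + μ₂ = μ₁ + J.negPart := by
    rw [← Measure.toSignedMeasure_eq_toSignedMeasure_iff, Measure.toSignedMeasure_add,
      Measure.toSignedMeasure_add]
    exact sub_eq_sub_iff_add_eq_add.1 h1
  have h3 : ∫ x, u x ∂(J.posPart + μ₂) = ∫ x, u x ∂(μ₁ + J.negPart) := by rw [h2]
  rw [integral_add_measure (hint _ inferInstance) (hint _ inferInstance),
    integral_add_measure (hint _ inferInstance) (hint _ inferInstance)] at h3
  linarith

/-- The ridge function `x ↦ φ (yᵀx + θ)` on `K`, indexed by the pair `(y, θ)`. -/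
def ridge {N : ℕ} (K : Set (Fin N → ℝ)) (φ : ℝ → ℝ) (hφ : Continuous φ)
    (p : (Fin N → ℝ) × ℝ) : C(K, ℝ) where
  toFun x := φ (p.1 ⬝ᵥ (x : Fin N → ℝ) + p.2)
  continuous_toFun := by
    have h : Continuous fun x : K => p.1 ⬝ᵥ (x : Fin N → ℝ) :=
      continuous_const.dotProduct continuous_subtype_val
    exact hφ.comp (h.add continuous_const)

lemma mem_closure_span_ridge {N : ℕ} {K : Set (Fin N → ℝ)} (hK : IsCompact K) {φ : ℝ → ℝ}
    (hφ : Continuous φ) (hφdisc : Discriminatory φ K) (f : C(K, ℝ)) :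
    f ∈ closure (Submodule.span ℝ (Set.range (ridge K φ hφ)) : Set C(K, ℝ)) := by
  have : CompactSpace K := isCompact_iff_compactSpace.mp hK
  set S := Submodule.span ℝ (Set.range (ridge K φ hφ)) with hS
  by_contra hf
  obtain ⟨L, c, hLf, hLc⟩ :=
    geometric_hahn_banach_point_closed S.convex.closure isClosed_closure hf
  have hc : c < 0 := by simpa using hLc 0 (subset_closure S.zero_mem)
  -- `L` is bounded below on the subspace `S`, hence vanishes there.
  have hL0 : ∀ b ∈ S, L b = 0 := by
    intro b hb
    by_contra hne
    have h := hLc ((c / L b) • b) (subset_closure (S.smul_mem _ hb))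
    rw [map_smul, smul_eq_mul, div_mul_cancel₀ _ hne] at h
    exact lt_irrefl _ h
  obtain ⟨P, Q, hP, hQ, hL⟩ := exists_pos_sub_pos L
  obtain ⟨μ₁, _, hμ₁⟩ := exists_measure_of_pos P hP
  obtain ⟨μ₂, _, hμ₂⟩ := exists_measure_of_pos Q hQ
  have hzero : μ₁.toSignedMeasure - μ₂.toSignedMeasure = 0 := by
    refine hφdisc _ inferInstance inferInstance fun y θ => ?_
    refine (integral_jordan_sub μ₁ μ₂ (ridge K φ hφ (y, θ))).trans ?_
    rw [← hμ₁, ← hμ₂, ← hL]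
    exact hL0 _ (Submodule.subset_span ⟨(y, θ), rfl⟩)
  have heq : μ₁ = μ₂ := Measure.toSignedMeasure_eq_toSignedMeasure_iff.1 (sub_eq_zero.1 hzero)
  have hLf0 : L f = 0 := by rw [hL, hμ₁, hμ₂, heq, sub_self]
  rw [hLf0] at hLf
  exact lt_asymm hLf hc

/-- **Cybenko's universal approximation theorem.** If `φ` is a
continuous discriminatory function for the compact set `K ⊆ ℝ^N`, then
single-hidden-layer real-valued neural networks with activation `φ` are dense
in `C(K)` with respect to the supremum norm. -/
theorem universal_approximation_real {N : ℕ} (K : Set (Fin N → ℝ))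
    (hK : IsCompact K) (φ : ℝ → ℝ) (hφcont : Continuous φ)
    (hφdisc : Discriminatory φ K) (f : (Fin N → ℝ) → ℝ) (hf : ContinuousOn f K)
    (ε : ℝ) (hε : 0 < ε) :
    ∃ (M : ℕ) (α θ : Fin M → ℝ) (y : Fin M → Fin N → ℝ),
      ∀ x ∈ K, |f x - ∑ i : Fin M, α i * φ (y i ⬝ᵥ x + θ i)| < ε := by
  have : CompactSpace K := isCompact_iff_compactSpace.mp hK
  let f' : C(K, ℝ) := ⟨K.domRestrict f, hf.domRestrict⟩
  obtain ⟨g, hg, hfg⟩ :=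
    Metric.mem_closure_iff.1 (mem_closure_span_ridge hK hφcont hφdisc f') ε hε
  obtain ⟨M, α, b, hb⟩ := Submodule.mem_span_set'.1 hg
  choose p hp using fun i => (b i).2
  refine ⟨M, α, fun i => (p i).2, fun i => (p i).1, fun x hx => ?_⟩
  have h := (ContinuousMap.dist_apply_le_dist (f := f') (g := g) ⟨x, hx⟩).trans_lt hfg
  rw [Real.dist_eq] at h
  have hgx : g ⟨x, hx⟩ = ∑ i : Fin M, α i * φ ((p i).1 ⬝ᵥ x + (p i).2) := by
    rw [← hb, ContinuousMap.sum_apply]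
    refine Finset.sum_congr rfl fun i _ => ?_
    rw [← hp i]
    rfl
  rw [hgx] at h
  exact h
end

section
/- Every bounded, non-constant continuous function φ : ℝ → ℝ is discriminatory for every compact set K ⊆ ℝ^N; that is, for every finite signed regular Borel measure μ on K, if ∫_K φ(yᵀx + θ) dμ(x) = 0 for all y ∈ ℝ^N and all θ ∈ ℝ, then μ = 0. -/
/-!
Write `P`, `Q` for the positive and negative parts of the signed measure; the hypothesis says that
`P` and `Q` integrate every ridge function `x ↦ φ (y ⬝ᵥ x + θ)` to the same value.

Mollification replaces `φ` by a smooth bounded nonconstant `ψ` with the same property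
(`exists_smooth_mollification`, `integral_convolution_eq`). Fix `y` and put `s x = y ⬝ᵥ x`.
Differentiating `t ↦ ∫ ψ (t * s x + θ)` repeatedly under the integral sign and setting `t = 0` gives
`ψ⁽ᵏ⁾(θ) * ∫ s ^ k ∂P = ψ⁽ᵏ⁾(θ) * ∫ s ^ k ∂Q`. A bounded smooth function with `ψ⁽ᵏ⁾ = 0` is a bounded
polynomial, hence constant, so `ψ⁽ᵏ⁾(θ) ≠ 0` for some `θ` and all moments of `s` under `P` and `Q`
agree (`moments_eq`). Since `s` is bounded on `K`, expanding the exponential shows that the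
characteristic functions of `P` and `Q` agree (`integral_cexp_eq`), so `P = Q`.
-/

open Matrix MeasureTheory

open scoped Convolution Topology ContDiff

section Polynomial

lemma exists_polynomial_derivative_eq (q : Polynomial ℝ) :
    ∃ p : Polynomial ℝ, Polynomial.derivative p = q := by
  induction q using Polynomial.induction_on' with
  | add p q hp hq =>
    obtain ⟨p', rfl⟩ := hp
    obtain ⟨q', rfl⟩ := hq
    exact ⟨p' + q', by simp⟩
  | monomial n a =>
    refine ⟨Polynomial.monomial (n + 1) (a / (n + 1)), ?_⟩
    rw [Polynomial.derivative_monomial]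
    congr 1
    push_cast
    field_simp

lemma exists_polynomial_of_iteratedDeriv_eq_zero (k : ℕ) (f : ℝ → ℝ) (hf : ContDiff ℝ ∞ f)
    (h : ∀ x, iteratedDeriv k f x = 0) : ∃ p : Polynomial ℝ, ∀ x, f x = p.eval x := by
  induction k generalizing f with
  | zero => exact ⟨0, fun x => by simpa using h x⟩
  | succ k ih =>
    have hd : ContDiff ℝ ∞ (deriv f) := (contDiff_infty_iff_deriv.1 hf).2
    obtain ⟨q, hq⟩ := ih (deriv f) hd (fun x => by rw [← iteratedDeriv_succ']; exact h x)
    obtain ⟨p, rfl⟩ := exists_polynomial_derivative_eq q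
    have hf1 : Differentiable ℝ f := (contDiff_infty_iff_deriv.1 hf).1
    have hconst := is_const_of_deriv_eq_zero (f := fun x => f x - p.eval x)
      (hf1.sub p.differentiable) (fun x => by
        rw [deriv_fun_sub (hf1 x) p.differentiableAt, hq, Polynomial.deriv, sub_self])
    refine ⟨p + Polynomial.C (f 0 - p.eval 0), fun x => ?_⟩
    have := hconst x 0
    simp only [Polynomial.eval_add, Polynomial.eval_C]
    linarith

lemma exists_iteratedDeriv_ne_zero (k : ℕ) (f : ℝ → ℝ) (hf : ContDiff ℝ ∞ f)
    (C : ℝ) (hC : ∀ x, |f x| ≤ C) (hne : ∃ a b, f a ≠ f b) :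
    ∃ x, iteratedDeriv k f x ≠ 0 := by
  by_contra! h
  obtain ⟨p, hp⟩ := exists_polynomial_of_iteratedDeriv_eq_zero k f hf h
  have hdeg : p.degree ≤ 0 := by
    rw [← Polynomial.isBoundedUnder_abs_atTop_iff]
    exact Filter.isBoundedUnder_of ⟨C, fun x => by rw [← hp]; exact hC x⟩
  obtain ⟨a, b, hab⟩ := hne
  apply hab
  rw [hp, hp, Polynomial.eq_C_of_degree_le_zero hdeg]
  simp

end Polynomial

section Mollification

/-- Mollifications of `φ` keep its bound and converge pointwise to `φ`, so one of them is
nonconstant. -/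
lemma exists_smooth_mollification (φ : ℝ → ℝ) (C : ℝ) (hC : ∀ x, |φ x| ≤ C)
    (hne : ∃ a b, φ a ≠ φ b) (hφ : Continuous φ) :
    ∃ ρ : ℝ → ℝ, Continuous ρ ∧ HasCompactSupport ρ ∧
      ContDiff ℝ ∞ (ρ ⋆[ContinuousLinearMap.lsmul ℝ ℝ, volume] φ) ∧
      (∀ x, |(ρ ⋆[ContinuousLinearMap.lsmul ℝ ℝ, volume] φ) x| ≤ C) ∧
      ∃ a b, (ρ ⋆[ContinuousLinearMap.lsmul ℝ ℝ, volume] φ) a ≠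
        (ρ ⋆[ContinuousLinearMap.lsmul ℝ ℝ, volume] φ) b := by
  obtain ⟨a, b, hab⟩ := hne
  let B : ℕ → ContDiffBump (0 : ℝ) := fun n =>
    ⟨1 / ((n : ℝ) + 1) / 2, 1 / ((n : ℝ) + 1), by positivity, half_lt_self (by positivity)⟩
  have hB : Filter.Tendsto (fun n => (B n).rOut) Filter.atTop (𝓝 0) :=
    tendsto_one_div_add_atTop_nhds_zero_nat
  have hlim := fun x => ContDiffBump.convolution_tendsto_right_of_continuous
    (μ := (volume : Measure ℝ)) hB hφ x
  obtain ⟨n, hn⟩ : ∃ n, ((B n).normed volume ⋆[ContinuousLinearMap.lsmul ℝ ℝ, volume] φ) a ≠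
      ((B n).normed volume ⋆[ContinuousLinearMap.lsmul ℝ ℝ, volume] φ) b := by
    by_contra! h
    exact hab (tendsto_nhds_unique (hlim a) (by simpa only [h] using hlim b))
  refine ⟨(B n).normed volume, (B n).continuous_normed, (B n).hasCompactSupport_normed,
    (B n).hasCompactSupport_normed.contDiff_convolution_left _ (B n).contDiff_normed
      hφ.locallyIntegrable, fun x => ?_, a, b, hn⟩
  rw [convolution_def, ← Real.norm_eq_abs]
  calc _ ≤ ∫ t, (B n).normed volume t * C := by
        refine norm_integral_le_of_norm_le ((B n).integrable_normed.mul_const C)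
          (Filter.Eventually.of_forall fun t => ?_)
        simp only [ContinuousLinearMap.lsmul_apply, smul_eq_mul, norm_mul, Real.norm_eq_abs]
        rw [abs_of_nonneg ((B n).nonneg_normed t)]
        exact mul_le_mul_of_nonneg_left (hC _) ((B n).nonneg_normed t)
    _ = C := by rw [integral_mul_const, (B n).integral_normed, one_mul]

variable {X : Type*} [TopologicalSpace X] [SecondCountableTopology X]
  [MeasurableSpace X] [BorelSpace X]

lemma integral_convolution (P : Measure X) [IsFiniteMeasure P] (φ ρ : ℝ → ℝ)
    (C : ℝ) (hC : ∀ x, |φ x| ≤ C) (hφ : Continuous φ) (hρ : Continuous ρ)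
    (hρc : HasCompactSupport ρ) (s : X → ℝ) (hs : Continuous s) :
    ∫ x, (ρ ⋆[ContinuousLinearMap.lsmul ℝ ℝ, volume] φ) (s x) ∂P =
      ∫ u, ρ u * ∫ x, φ (s x - u) ∂P := by
  simp only [convolution_def, ContinuousLinearMap.lsmul_apply, smul_eq_mul]
  rw [integral_integral_swap]
  · simp only [integral_const_mul]
  · have h1 : Integrable (fun z : X × ℝ => ρ z.2) (P.prod volume) :=
      (hρ.integrable_of_hasCompactSupport hρc).comp_snd P
    refine h1.mul_bdd (c := C) ?_ (Filter.Eventually.of_forall fun z => hC _)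
    exact Continuous.aestronglyMeasurable (by fun_prop)

/-- If `P` and `Q` agree on `φ (s · + θ)` for every `θ`, they agree on `(ρ ⋆ φ) ∘ s`, because by
Fubini the latter integrates to a `ρ`-weighted average of the former over `θ`. -/
lemma integral_convolution_eq (P Q : Measure X) [IsFiniteMeasure P] [IsFiniteMeasure Q]
    (φ ρ : ℝ → ℝ)
    (C : ℝ) (hC : ∀ x, |φ x| ≤ C) (hφ : Continuous φ) (hρ : Continuous ρ)
    (hρc : HasCompactSupport ρ) (s : X → ℝ) (hs : Continuous s)
    (h : ∀ θ, ∫ x, φ (s x + θ) ∂P = ∫ x, φ (s x + θ) ∂Q) :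
    ∫ x, (ρ ⋆[ContinuousLinearMap.lsmul ℝ ℝ, volume] φ) (s x) ∂P =
      ∫ x, (ρ ⋆[ContinuousLinearMap.lsmul ℝ ℝ, volume] φ) (s x) ∂Q := by
  rw [integral_convolution P φ ρ C hC hφ hρ hρc s hs,
    integral_convolution Q φ ρ C hC hφ hρ hρc s hs]
  simp only [sub_eq_add_neg, h]

end Mollification

section Moments

lemma exists_abs_le_of_continuous {X : Type*} [TopologicalSpace X] [CompactSpace X]
    (s : X → ℝ) (hs : Continuous s) : ∃ R, ∀ x, |s x| ≤ R := by
  obtain ⟨R, hR⟩ := isCompact_univ.exists_bound_of_continuousOn hs.continuousOn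
  exact ⟨R, fun x => hR x (Set.mem_univ x)⟩

variable {X : Type*} [TopologicalSpace X] [CompactSpace X]
  [MeasurableSpace X] [BorelSpace X]

lemma hasDerivAt_integral_ridge (P : Measure X) [IsFiniteMeasure P] (f : ℝ → ℝ)
    (hf : Differentiable ℝ f) (hf' : Continuous (deriv f)) (s : X → ℝ) (hs : Continuous s)
    (k : ℕ) (t θ : ℝ) :
    HasDerivAt (fun t => ∫ x, f (t * s x + θ) * s x ^ k ∂P)
      (∫ x, deriv f (t * s x + θ) * s x ^ (k + 1) ∂P) t := by
  have hfc := hf.continuous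
  obtain ⟨M, hM⟩ := ((isCompact_closedBall t 1).prod (isCompact_univ (X := X))
    ).exists_bound_of_continuousOn
      (f := fun z : ℝ × X => deriv f (z.1 * s z.2 + θ) * s z.2 ^ (k + 1))
      (Continuous.continuousOn (by fun_prop))
  have key := hasDerivAt_integral_of_dominated_loc_of_deriv_le (μ := P) (x₀ := t)
    (F := fun t x => f (t * s x + θ) * s x ^ k)
    (F' := fun t x => deriv f (t * s x + θ) * s x ^ (k + 1)) (bound := fun _ => M)
    (Metric.closedBall_mem_nhds t one_pos)
    (Filter.Eventually.of_forall fun t =>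
      (Continuous.integrable_of_hasCompactSupport (by fun_prop)
        (HasCompactSupport.of_compactSpace _)).aestronglyMeasurable)
    (Continuous.integrable_of_hasCompactSupport (by fun_prop)
        (HasCompactSupport.of_compactSpace _))
    (Continuous.integrable_of_hasCompactSupport (by fun_prop)
        (HasCompactSupport.of_compactSpace _)).aestronglyMeasurable
    (Filter.Eventually.of_forall fun x t' ht' => hM (t', x) ⟨ht', Set.mem_univ _⟩)
    (integrable_const M)
    (Filter.Eventually.of_forall fun x t' _ => by
      have h1 : HasDerivAt (fun t => t * s x + θ) (s x) t' := by
        simpa using ((hasDerivAt_id t').mul_const (s x)).add_const θ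
      have h2 := ((hf (t' * s x + θ)).hasDerivAt.comp t' h1).mul_const (s x ^ k)
      refine h2.congr_deriv ?_
      ring)
  exact key.2

/-- Follows by `k`-fold differentiation of the hypothesis in `t`. -/
lemma integral_iteratedDeriv_ridge_eq (P Q : Measure X) [IsFiniteMeasure P] [IsFiniteMeasure Q]
    (f : ℝ → ℝ) (hf : ContDiff ℝ ∞ f) (s : X → ℝ) (hs : Continuous s)
    (h : ∀ t θ, ∫ x, f (t * s x + θ) ∂P = ∫ x, f (t * s x + θ) ∂Q) (k : ℕ) (t θ : ℝ) :
    ∫ x, iteratedDeriv k f (t * s x + θ) * s x ^ k ∂P =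
      ∫ x, iteratedDeriv k f (t * s x + θ) * s x ^ k ∂Q := by
  induction k generalizing t with
  | zero => simpa using h t θ
  | succ k ih =>
    have hd : Differentiable ℝ (iteratedDeriv k f) :=
      hf.differentiable_iteratedDeriv k (by exact_mod_cast WithTop.coe_lt_top _)
    have hc : Continuous (deriv (iteratedDeriv k f)) := by
      rw [← iteratedDeriv_succ]
      exact hf.continuous_iteratedDeriv (k + 1) (by exact_mod_cast le_top)
    have hP := hasDerivAt_integral_ridge P _ hd hc s hs k t θ
    have hQ := hasDerivAt_integral_ridge Q _ hd hc s hs k t θ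
    simp only [ih] at hP
    simpa only [iteratedDeriv_succ] using hP.unique hQ

lemma moments_eq (P Q : Measure X) [IsFiniteMeasure P] [IsFiniteMeasure Q]
    (f : ℝ → ℝ) (hf : ContDiff ℝ ∞ f) (C : ℝ) (hC : ∀ x, |f x| ≤ C) (hne : ∃ a b, f a ≠ f b)
    (s : X → ℝ) (hs : Continuous s)
    (h : ∀ t θ, ∫ x, f (t * s x + θ) ∂P = ∫ x, f (t * s x + θ) ∂Q) (k : ℕ) :
    ∫ x, s x ^ k ∂P = ∫ x, s x ^ k ∂Q := by
  obtain ⟨θ, hθ⟩ := exists_iteratedDeriv_ne_zero k f hf C hC hne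
  have := integral_iteratedDeriv_ridge_eq P Q f hf s hs h k 0 θ
  simp only [zero_mul, zero_add, integral_const_mul] at this
  exact mul_left_cancel₀ hθ this

lemma hasSum_integral_cexp (P : Measure X) [IsFiniteMeasure P] (s : X → ℝ) (hs : Continuous s) :
    HasSum (fun k : ℕ => ((∫ x, s x ^ k ∂P : ℝ) : ℂ) * (Complex.I ^ k / (k.factorial : ℂ)))
      (∫ x, Complex.exp (s x * Complex.I) ∂P) := by
  obtain ⟨R, hR⟩ := exists_abs_le_of_continuous s hs
  have key := hasSum_integral_of_dominated_convergence (μ := P)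
    (F := fun (k : ℕ) x => ((s x ^ k : ℝ) : ℂ) * (Complex.I ^ k / (k.factorial : ℂ)))
    (f := fun x => Complex.exp (s x * Complex.I))
    (fun k _ => R ^ k / (k.factorial : ℝ))
    (fun k => (Continuous.integrable_of_hasCompactSupport (by fun_prop)
        (HasCompactSupport.of_compactSpace _)).aestronglyMeasurable)
    (fun k => Filter.Eventually.of_forall fun x => by
      simp only [Complex.ofReal_pow, norm_mul, norm_pow, norm_div, Complex.norm_I, one_pow,
        Complex.norm_real, Complex.norm_natCast, Real.norm_eq_abs, mul_one_div]
      gcongr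
      exact hR x)
    (Filter.Eventually.of_forall fun _ => Real.summable_pow_div_factorial R)
    (integrable_const _)
    (Filter.Eventually.of_forall fun x => by
      have := NormedSpace.expSeries_div_hasSum_exp ((s x : ℂ) * Complex.I)
      rw [← Complex.exp_eq_exp_ℂ] at this
      refine Eq.subst (motive := fun F => HasSum F _) (funext fun k => ?_) this
      push_cast
      ring)
  refine Eq.subst (motive := fun F => HasSum F _) (funext fun k => ?_) key
  rw [integral_mul_const, integral_complex_ofReal]

lemma integral_cexp_eq (P Q : Measure X) [IsFiniteMeasure P] [IsFiniteMeasure Q]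
    (s : X → ℝ) (hs : Continuous s) (h : ∀ k : ℕ, ∫ x, s x ^ k ∂P = ∫ x, s x ^ k ∂Q) :
    ∫ x, Complex.exp (s x * Complex.I) ∂P = ∫ x, Complex.exp (s x * Complex.I) ∂Q := by
  have hP := hasSum_integral_cexp P s hs
  simp only [h] at hP
  exact hP.unique (hasSum_integral_cexp Q s hs)

end Moments

lemma dual_apply_eq_dotProduct {N : ℕ} (L : StrongDual ℝ (Fin N → ℝ)) (x : Fin N → ℝ) :
    L x = (fun i => L (Pi.single i 1)) ⬝ᵥ x := by
  conv_lhs => rw [pi_eq_sum_univ' x]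
  simp [dotProduct, mul_comm, Pi.single]

/-- **Hornik.** Every bounded, non-constant continuous function
`φ : ℝ → ℝ` is discriminatory for every compact set `K ⊆ ℝ^N`. -/
theorem bounded_nonconstant_is_discriminatory (φ : ℝ → ℝ)
    (hbdd : ∃ C : ℝ, ∀ x : ℝ, |φ x| ≤ C)
    (hnonconst : ∃ a b : ℝ, φ a ≠ φ b)
    (hcont : Continuous φ)
    {N : ℕ} (K : Set (Fin N → ℝ)) (hK : IsCompact K) :
    Discriminatory φ K := by
  intro μ _ _ h
  have : CompactSpace K := isCompact_iff_compactSpace.1 hK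
  obtain ⟨C, hC⟩ := hbdd
  obtain ⟨ρ, hρ, hρc, hψ, hψC, hψne⟩ := exists_smooth_mollification φ C hC hnonconst hcont
  set P := μ.toJordanDecomposition.posPart with hP
  set Q := μ.toJordanDecomposition.negPart with hQ
  have hchar : ∀ y : Fin N → ℝ,
      ∫ x : K, Complex.exp ((y ⬝ᵥ (x : Fin N → ℝ) : ℝ) * Complex.I) ∂P =
        ∫ x : K, Complex.exp ((y ⬝ᵥ (x : Fin N → ℝ) : ℝ) * Complex.I) ∂Q := by
    intro y
    have hs : Continuous fun x : K => y ⬝ᵥ (x : Fin N → ℝ) :=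
      continuous_const.dotProduct continuous_subtype_val
    refine integral_cexp_eq P Q _ hs (moments_eq P Q _ hψ C hψC hψne _ hs fun t θ => ?_)
    refine integral_convolution_eq P Q φ ρ C hC hcont hρ hρc
      (fun x : K => t * (y ⬝ᵥ (x : Fin N → ℝ)) + θ) (by fun_prop) fun θ' => ?_
    have := sub_eq_zero.1 (h (t • y) (θ + θ'))
    simpa only [smul_dotProduct, smul_eq_mul, add_assoc] using this
  have hmap : P.map ((↑) : K → Fin N → ℝ) = Q.map ((↑) : K → Fin N → ℝ) := by
    refine Measure.ext_of_charFunDual (funext fun L => ?_)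
    rw [charFunDual_apply, charFunDual_apply,
      integral_map measurable_subtype_coe.aemeasurable
        (Continuous.aestronglyMeasurable (by fun_prop)),
      integral_map measurable_subtype_coe.aemeasurable
        (Continuous.aestronglyMeasurable (by fun_prop))]
    simpa only [← dual_apply_eq_dotProduct] using hchar fun i => L (Pi.single i 1)
  have hPQ : P = Q := by
    have he := MeasurableEmbedding.subtype_coe hK.measurableSet
    rw [← he.comap_map P, hmap, he.comap_map]
  rw [← SignedMeasure.toSignedMeasure_toJordanDecomposition μ,
    JordanDecomposition.toSignedMeasure]
  ext i hi
  simp only [← hP, ← hQ, hPQ, sub_self]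
end

section
/- The logistic sigmoid function σ(x) = 1/(1 + e^{−x}) is discriminatory for every compact set K ⊆ ℝ^N; that is, for every finite signed regular Borel measure μ on K, if ∫_K σ(yᵀx + θ) dμ(x) = 0 for all y ∈ ℝ^N and all θ ∈ ℝ, then μ = 0. -/
open Matrix MeasureTheory

/-- The linear term `n` in the argument forces the limit `1` (rather than `1 / 2`) at `t = 0`. -/
lemma sigmoid_tendsto_indicator (t : ℝ) :
    Filter.Tendsto (fun n : ℕ => 1 / (1 + Real.exp (-((n : ℝ) ^ 2 * t + n))))
      Filter.atTop (nhds ((Set.Ici (0 : ℝ)).indicator (fun _ => (1 : ℝ)) t)) := by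
  have hn := tendsto_natCast_atTop_atTop (R := ℝ)
  by_cases ht : 0 ≤ t
  · have h1 : Filter.Tendsto (fun n : ℕ => (n : ℝ) ^ 2 * t + n) Filter.atTop Filter.atTop :=
      Filter.tendsto_atTop_mono (fun n => by nlinarith [mul_nonneg (sq_nonneg (n : ℝ)) ht]) hn
    have h2 := (Real.tendsto_exp_neg_atTop_nhds_zero.comp h1).const_add 1
    simpa [Set.indicator, ht] using h2.inv₀ (by norm_num)
  · have h1 : Filter.Tendsto (fun n : ℕ => (n : ℝ) * ((n : ℝ) * (-t) + (-1)))
        Filter.atTop Filter.atTop :=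
      hn.atTop_mul_atTop₀ (Filter.tendsto_atTop_add_const_right _ _
        (hn.atTop_mul_const (by linarith)))
    have h2 := Filter.tendsto_atTop_add_const_left _ 1 (Real.tendsto_exp_atTop.comp h1)
    have h3 := h2.inv_tendsto_atTop
    simp only [Set.indicator, Set.mem_Ici, ht, if_false]
    refine h3.congr fun n => ?_
    simp only [Pi.inv_apply, Function.comp, one_div]
    congr 3
    ring

lemma integral_sigmoid_tendsto {X : Type*} [MeasurableSpace X] (P : Measure X) [IsFiniteMeasure P]
    {g : X → ℝ} (hg : Measurable g) (c : ℝ) :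
    Filter.Tendsto (fun n : ℕ => ∫ x, 1 / (1 + Real.exp (-((n : ℝ) ^ 2 * (g x - c) + n))) ∂P)
      Filter.atTop (nhds (P.real (g ⁻¹' Set.Ici c))) := by
  have hlim : P.real (g ⁻¹' Set.Ici c)
      = ∫ x, (Set.Ici (0 : ℝ)).indicator (fun _ => (1 : ℝ)) (g x - c) ∂P := by
    rw [← integral_indicator_one (hg measurableSet_Ici)]
    congr 1 with x
    simp [Set.indicator]
  rw [hlim]
  refine tendsto_integral_of_dominated_convergence (fun _ => (1 : ℝ)) (fun n => ?_)
    (integrable_const _) (fun n => ?_) ?_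
  · exact Measurable.aestronglyMeasurable (by fun_prop)
  · refine Filter.Eventually.of_forall fun x => ?_
    have := Real.exp_pos (-((n : ℝ) ^ 2 * (g x - c) + n))
    rw [Real.norm_of_nonneg (by positivity), div_le_one (by positivity)]
    linarith
  · exact Filter.Eventually.of_forall fun x => sigmoid_tendsto_indicator (g x - c)

/-- The logistic sigmoid `σ(x) = 1/(1 + e^{−x})` is
discriminatory for every compact set `K ⊆ ℝ^N`. -/
theorem sigmoid_is_discriminatory {N : ℕ} (K : Set (Fin N → ℝ))
    (hK : IsCompact K) :
    Discriminatory (fun x : ℝ => 1 / (1 + Real.exp (-x))) K := by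
  intro μ _ _ h
  set P := μ.toJordanDecomposition.posPart with hP
  set Q := μ.toJordanDecomposition.negPart with hQ
  have hmeas (y : Fin N → ℝ) : Measurable fun x : K => y ⬝ᵥ (x : Fin N → ℝ) := by
    have hi (i : Fin N) : Measurable fun x : K => (x : Fin N → ℝ) i :=
      (measurable_pi_apply i).comp measurable_subtype_coe
    exact Finset.measurable_sum _ fun i _ => (hi i).const_mul (y i)
  have hmap (y : Fin N → ℝ) : P.map (fun x : K => y ⬝ᵥ (x : Fin N → ℝ))
      = Q.map (fun x : K => y ⬝ᵥ (x : Fin N → ℝ)) := by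
    refine Measure.ext_of_Ici _ _ fun c => ?_
    rw [Measure.map_apply (hmeas y) measurableSet_Ici, Measure.map_apply (hmeas y) measurableSet_Ici]
    have hp := integral_sigmoid_tendsto P (hmeas y) c
    have hq := integral_sigmoid_tendsto Q (hmeas y) c
    refine (measureReal_eq_measureReal_iff).1 (tendsto_nhds_unique hp (hq.congr fun n => ?_))
    -- The steep sigmoid has weight `n² y` and bias `n - n² c`.
    have := sub_eq_zero.1 (h ((n : ℝ) ^ 2 • y) (n - (n : ℝ) ^ 2 * c))
    simp only [smul_dotProduct, smul_eq_mul] at this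
    convert this.symm using 7 <;> ring
  have hPQ : P.map (Subtype.val : K → Fin N → ℝ) = Q.map Subtype.val := by
    refine Measure.ext_of_charFunDual ?_
    ext L
    have hL : (fun x : K => L (x : Fin N → ℝ))
        = fun x : K => (fun i => L (Pi.single i 1)) ⬝ᵥ (x : Fin N → ℝ) := by
      funext x
      conv_lhs => rw [pi_eq_sum_univ' (x : Fin N → ℝ)]
      simp [dotProduct, mul_comm, Pi.single]
    have hcomp (R : Measure K) : (R.map (Subtype.val : K → Fin N → ℝ)).map L
        = R.map (fun x : K => L (x : Fin N → ℝ)) :=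
      Measure.map_map (by fun_prop) measurable_subtype_coe
    rw [charFunDual_eq_charFun_map_one, charFunDual_eq_charFun_map_one, hcomp, hcomp, hL, hmap]
  have hemb : MeasurableEmbedding (Subtype.val : K → Fin N → ℝ) :=
    MeasurableEmbedding.subtype_coe hK.measurableSet
  have hEq : P = Q := by
    rw [← hemb.comap_map P, hPQ, hemb.comap_map]
  rw [← SignedMeasure.toSignedMeasure_toJordanDecomposition μ,
    JordanDecomposition.toSignedMeasure, sub_eq_zero]
  exact Measure.toSignedMeasure_congr hEq
end

section
/- The rectified linear unit ReLU(x) = max(x, 0) is discriminatory for every compact set K ⊆ ℝ^N; that is, for every finite signed regular Borel measure μ on K, if ∫_K ReLU(yᵀx + θ) dμ(x) = 0 for all y ∈ ℝ^N and all θ ∈ ℝ, then μ = 0. -/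
/-!
Let `p`, `q` be the positive and negative parts of the signed measure. The difference quotients
`n * (max (t - a + 1 / n) 0 - max (t - a) 0)` are bounded and converge to the indicator of
`[a, ∞)`, so by dominated convergence `p` and `q` agree on every closed half-space intersected
with `K` (`measure_halfSpace_eq`). Hence all one-dimensional projections of `p` and `q` coincide,
and so do their characteristic functions, which determine finite measures on `ℝ^N` (the
Cramér–Wold argument). Therefore `p = q` and the signed measure `p - q` vanishes.
-/

open Matrix MeasureTheory

open Filter Topology

lemma tendsto_relu_quotient (t : ℝ) :
    Tendsto (fun n : ℕ => ((n : ℝ) + 1) * (max (t + 1 / ((n : ℝ) + 1)) 0 - max t 0)) atTop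
      (𝓝 ((Set.Ici (0 : ℝ)).indicator (fun _ => 1) t)) := by
  by_cases ht : 0 ≤ t
  · rw [Set.indicator_of_mem (by simpa using ht)]
    refine tendsto_const_nhds.congr fun n => ?_
    have hn : (0 : ℝ) < (n : ℝ) + 1 := by positivity
    rw [max_eq_left ht, max_eq_left (by positivity)]
    field_simp
    ring
  · rw [Set.indicator_of_notMem (by simpa using ht)]
    push Not at ht
    -- once `1 / (n + 1) < -t`, both positive parts vanish
    have h := tendsto_one_div_add_atTop_nhds_zero_nat (𝕜 := ℝ)
    refine tendsto_const_nhds.congr' ?_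
    filter_upwards [h.eventually (gt_mem_nhds (neg_pos.mpr ht))] with n hn
    rw [max_eq_right ht.le, max_eq_right (by linarith)]
    simp

lemma norm_relu_quotient_le (t : ℝ) (n : ℕ) :
    ‖((n : ℝ) + 1) * (max (t + 1 / ((n : ℝ) + 1)) 0 - max t 0)‖ ≤ 1 := by
  have hn : (0 : ℝ) < (n : ℝ) + 1 := by positivity
  have h := abs_max_sub_max_le_abs (t + 1 / ((n : ℝ) + 1)) t 0
  rw [add_sub_cancel_left, abs_of_pos (one_div_pos.mpr hn)] at h
  rw [norm_mul, Real.norm_eq_abs, Real.norm_eq_abs, abs_of_pos hn]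
  calc _ ≤ ((n : ℝ) + 1) * (1 / ((n : ℝ) + 1)) := by gcongr
    _ = 1 := by field_simp

/-- The measure of a superlevel set `{f ≥ a}` is the limit of difference quotients of the
ReLU integrals of `f`. -/
lemma tendsto_integral_relu {X : Type*} [TopologicalSpace X] [CompactSpace X]
    [MeasurableSpace X] [BorelSpace X] (p : Measure X) [IsFiniteMeasure p]
    {f : X → ℝ} (hf : Continuous f) (a : ℝ) :
    Tendsto (fun n : ℕ => ((n : ℝ) + 1) *
        ((∫ x, max (f x + (-a + 1 / ((n : ℝ) + 1))) 0 ∂p) - ∫ x, max (f x + -a) 0 ∂p)) atTop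
      (𝓝 (p.real (f ⁻¹' Set.Ici a))) := by
  have hint : ∀ θ : ℝ, Integrable (fun x => max (f x + θ) 0) p := fun θ =>
    Continuous.integrable_of_hasCompactSupport (by fun_prop) (HasCompactSupport.of_compactSpace _)
  have hlim : p.real (f ⁻¹' Set.Ici a) =
      ∫ x, (Set.Ici (0 : ℝ)).indicator (fun _ => (1 : ℝ)) (f x + -a) ∂p := by
    rw [← integral_indicator_one (hf.measurable measurableSet_Ici)]
    refine integral_congr_ae (.of_forall fun x => ?_)
    by_cases hx : a ≤ f x <;> simp [Set.indicator, hx]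
  rw [hlim]
  refine (tendsto_integral_of_dominated_convergence
    (F := fun (n : ℕ) x => ((n : ℝ) + 1) *
      (max (f x + -a + 1 / ((n : ℝ) + 1)) 0 - max (f x + -a) 0))
    (fun _ => (1 : ℝ)) ?_ (integrable_const _) ?_ ?_).congr fun n => ?_
  · exact fun n => (by fun_prop : Continuous _).measurable.aestronglyMeasurable
  · exact fun n => .of_forall fun x => norm_relu_quotient_le _ n
  · exact .of_forall fun x => tendsto_relu_quotient _
  · rw [integral_const_mul, ← integral_sub (hint _) (hint _)]
    simp only [add_assoc]

lemma measure_halfSpace_eq {X : Type*} [TopologicalSpace X] [CompactSpace X]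
    [MeasurableSpace X] [BorelSpace X] (p q : Measure X) [IsFiniteMeasure p] [IsFiniteMeasure q]
    {f : X → ℝ} (hf : Continuous f)
    (h : ∀ θ : ℝ, ∫ x, max (f x + θ) 0 ∂p = ∫ x, max (f x + θ) 0 ∂q) (a : ℝ) :
    p (f ⁻¹' Set.Ici a) = q (f ⁻¹' Set.Ici a) := by
  have hp := tendsto_integral_relu p hf a
  simp only [h] at hp
  have := tendsto_nhds_unique hp (tendsto_integral_relu q hf a)
  rwa [measureReal_def, measureReal_def,
    ENNReal.toReal_eq_toReal_iff' (measure_ne_top _ _) (measure_ne_top _ _)] at this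

/-- The rectified linear unit `ReLU(x) = max(x, 0)` is
discriminatory for every compact set `K ⊆ ℝ^N`. -/
theorem relu_is_discriminatory {N : ℕ} (K : Set (Fin N → ℝ))
    (hK : IsCompact K) :
    Discriminatory (fun x : ℝ => max x 0) K := by
  intro μ _ _ h
  have : CompactSpace K := isCompact_iff_compactSpace.mp hK
  set p := μ.toJordanDecomposition.posPart with hp
  set q := μ.toJordanDecomposition.negPart with hq
  have hproj : ∀ y : Fin N → ℝ, p.map (fun x : K => y ⬝ᵥ (x : Fin N → ℝ)) =
      q.map (fun x : K => y ⬝ᵥ (x : Fin N → ℝ)) := by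
    intro y
    have hf : Continuous fun x : K => y ⬝ᵥ (x : Fin N → ℝ) := by
      exact Continuous.dotProduct continuous_const continuous_subtype_val
    refine Measure.ext_of_Ici _ _ fun a => ?_
    rw [Measure.map_apply hf.measurable measurableSet_Ici,
      Measure.map_apply hf.measurable measurableSet_Ici]
    exact measure_halfSpace_eq p q hf (fun θ => sub_eq_zero.mp (h y θ)) a
  have hmap : p.map (Subtype.val : K → Fin N → ℝ) = q.map Subtype.val := by
    refine Measure.ext_of_charFunDual (funext fun L => ?_)
    -- every functional `L` is the dot product with its values on the standard basis
    have hL : ∀ x, L x = (fun i => L (Pi.single i 1)) ⬝ᵥ x := by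
      intro x
      conv_lhs => rw [← Finset.univ_sum_single x, map_sum]
      refine Finset.sum_congr rfl fun i _ => ?_
      rw [mul_comm, ← smul_eq_mul, ← map_smul, ← Pi.single_smul, smul_eq_mul, mul_one]
    have hcomp : (L ∘ Subtype.val : K → ℝ) =
        fun x : K => (fun i => L (Pi.single i 1)) ⬝ᵥ (x : Fin N → ℝ) := funext fun x => hL x
    rw [charFunDual_eq_charFun_map_one, charFunDual_eq_charFun_map_one,
      Measure.map_map (by fun_prop) measurable_subtype_coe,
      Measure.map_map (by fun_prop) measurable_subtype_coe, hcomp, hproj]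
  have hpq : p = q := by
    have hemb : MeasurableEmbedding (Subtype.val : K → Fin N → ℝ) :=
      MeasurableEmbedding.subtype_coe hK.measurableSet
    rw [← hemb.comap_map p, hmap, hemb.comap_map q]
  rw [← μ.toSignedMeasure_toJordanDecomposition, JordanDecomposition.toSignedMeasure]
  simp only [← hp, ← hq, hpq, sub_self]
end
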